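/- arXiv:2006.04672 — 2 statements merged into one kernel-verified Lean document; each statement's English description precedes it below -/
import Mathlib

section
/- Let X be a nonempty set, ℓ : X × X → [0,∞) a dissimilarity function, and f : X → ℝ a bounded function with f* = sup_{x∈X} f(x), satisfying the weak-Lipschitz condition: f* − f(y) ≤ f* − f(x) + max{f* − f(x), ℓ(x,y)} for all x, y ∈ X. Let P ⊆ X be a nonempty subset with diameter at most δ > 0, i.e. ℓ(x,y) ≤ δ for all x, y ∈ P, and suppose that f* − sup_{x∈P} f(x) ≤ c·δ for some constant c ≥ 0. Then every y ∈ P satisfies f* − f(y) ≤ max{2c, c+1}·δ. -/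
/-- The weak-Lipschitz condition on `P` for a function `f` with respect to a dissimilarity `ℓ`,
in terms of the gaps `a - f x` to a reference value `a`. In bandit optimisation `a` is the supremum
of `f` over the whole space; here it is a parameter, so that the notion can be restricted to `P`
while the gaps are still measured from the global optimum. -/
def WeakLipschitzOn {X G : Type*} [AddCommGroup G] [LinearOrder G]
    (ℓ : X → X → G) (f : X → G) (a : G) (P : Set X) : Prop :=
  ∀ x ∈ P, ∀ y ∈ P, a - f y ≤ a - f x + max (a - f x) (ℓ x y)

theorem WeakLipschitzOn.sub_le_max {X R : Type*} [Ring R] [LinearOrder R] [IsOrderedAddMonoid R]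
    {ℓ : X → X → R} {f : X → R} {a δ : R} {P : Set X} (h : WeakLipschitzOn ℓ f a P)
    {x y : X} (hx : x ∈ P) (hy : y ∈ P) (hxy : ℓ x y ≤ δ) :
    a - f y ≤ max (2 * (a - f x)) (a - f x + δ) :=
  calc
    a - f y ≤ a - f x + max (a - f x) (ℓ x y) := h x hx y hy
    _ ≤ a - f x + max (a - f x) δ := by gcongr
    _ = max (2 * (a - f x)) (a - f x + δ) := by rw [← max_add_add_left, two_mul]

section LinearOrderedField

variable {K : Type*} [Field K] [LinearOrder K] [IsStrictOrderedRing K]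

theorem le_max_two_mul_add_iff_min_le {t r δ : K} :
    t ≤ max (2 * r) (r + δ) ↔ min (t / 2) (t - δ) ≤ r := by
  rw [le_max_iff, min_le_iff, div_le_iff₀' two_pos, sub_le_iff_le_add]

-- Solving the pointwise bound for the gap at `x` gives a lower bound on it that does not depend
-- on `x`, and such a bound passes to the supremum `s` even if `s` is not attained on `P`.
theorem stmt6_general {X : Type*} {ℓ : X → X → K} {f : X → K} {a s r δ : K} {P : Set X}
    (hweak : WeakLipschitzOn ℓ f a P) (hdiam : ∀ x ∈ P, ∀ y ∈ P, ℓ x y ≤ δ)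
    (hs : IsLUB (f '' P) s) (hgap : a - s ≤ r) :
    ∀ y ∈ P, a - f y ≤ max (2 * r) (r + δ) := by
  intro y hy
  rw [le_max_two_mul_add_iff_min_le]
  set m := min ((a - f y) / 2) (a - f y - δ)
  have gap_ge : ∀ x ∈ P, m ≤ a - f x := fun x hx ↦
    le_max_two_mul_add_iff_min_le.mp (hweak.sub_le_max hx hy (hdiam x hx y hy))
  have sup_le : s ≤ a - m :=
    hs.2 (Set.forall_mem_image.mpr fun x hx ↦ le_sub_comm.mp (gap_ge x hx))
  exact (le_sub_comm.mp sup_le).trans hgap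

end LinearOrderedField

/-- Lemma 3 of Bubeck et al.: under the weak-Lipschitz condition, if a nonempty
set `P` of diameter at most `δ` has suboptimality gap `f* − sup_{x∈P} f(x) ≤ c·δ`, then every
arm in `P` is `max{2c, c+1}·δ`-optimal. -/
theorem stmt6 {X : Type*} [Nonempty X]
    (ℓ : X → X → ℝ) (hℓ : ∀ x y, 0 ≤ ℓ x y)
    (f : X → ℝ) (M : ℝ) (hf : ∀ x, |f x| ≤ M)
    (fstar : ℝ) (hfstar : fstar = ⨆ x, f x)
    (hweak : ∀ x y, fstar - f y ≤ fstar - f x + max (fstar - f x) (ℓ x y))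
    (P : Set X) (hP : P.Nonempty) (δ : ℝ) (hδ : 0 < δ)
    (hdiam : ∀ x ∈ P, ∀ y ∈ P, ℓ x y ≤ δ)
    (c : ℝ) (hc : 0 ≤ c)
    (hgap : fstar - sSup (f '' P) ≤ c * δ) :
    ∀ y ∈ P, fstar - f y ≤ max (2 * c) (c + 1) * δ := by
  have hsup : IsLUB (f '' P) (sSup (f '' P)) :=
    isLUB_csSup (hP.image f) ⟨M, Set.forall_mem_image.mpr fun x _ ↦ (abs_le.mp (hf x)).2⟩
  simpa only [max_mul_of_nonneg _ _ hδ.le, add_mul, one_mul, mul_assoc] using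
    stmt6_general (fun x _ y _ ↦ hweak x y) hdiam hsup hgap
end

section
/- Let X be a nonempty set, ℓ : X × X → [0,∞) a dissimilarity function, and (P_{h,i}), h ≥ 0, 1 ≤ i ≤ 2^h, a tree of coverings of X: P_{0,1} = X and P_{h,i} = P_{h+1,2i−1} ∪ P_{h+1,2i} for all h ≥ 0 and 1 ≤ i ≤ 2^h. Suppose there are constants ν₁ ≥ ν₂ > 0 and ρ ∈ (0,1) such that for all h ≥ 0: (a) ℓ(x,y) ≤ ν₁ρ^h for all x, y ∈ P_{h,i} and all 1 ≤ i ≤ 2^h; (b) for each 1 ≤ i ≤ 2^h there exists x°_{h,i} ∈ P_{h,i} with the ℓ-open ball B_{h,i} = B(x°_{h,i}, ν₂ρ^h) contained in P_{h,i}; (c) B_{h,i} ∩ B_{h,j} = ∅ for all 1 ≤ i < j ≤ 2^h. Let f : X → ℝ be bounded with f* = sup_{x∈X} f(x), satisfying the weak-Lipschitz condition: f* − f(y) ≤ f* − f(x) + max{f* − f(x), ℓ(x,y)} for all x, y ∈ X. For ε > 0 let X_ε = {x ∈ X : f(x) ≥ f* − ε}, and for h ≥ 0 let I_h = {i : 1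 ≤ i ≤ 2^h, sup_{x∈P_{h,i}} f(x) ≥ f* − 2ν₁ρ^h}. Let d = max{0, limsup_{ε→0⁺} (ln N(X_{(4ν₁/ν₂)·ε}, ℓ, ε))/ln(1/ε)} be the 4ν₁/ν₂-near-optimality dimension of f, and let d' > d. Then there exists a constant C > 0 such that |I_h| ≤ C·(ν₂ρ^h)^{−d'} for all h ≥ 0. -/
open Filter

/-- The `ℓ`-open ball of center `x` and radius `ε` for a dissimilarity function `ℓ`. -/
def dissimBall {X : Type*} (ℓ : X → X → ℝ) (x : X) (ε : ℝ) : Set X :=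
  {y | ℓ x y < ε}

/-- The `ε`-packing number of `Y ⊆ X` w.r.t. the dissimilarity `ℓ`: the largest integer `k`
such that there exist `k` pairwise disjoint `ℓ`-open balls of radius `ε` contained in `Y`. -/
noncomputable def packingNumber {X : Type*} (ℓ : X → X → ℝ) (Y : Set X) (ε : ℝ) : ℕ :=
  sSup {k : ℕ | ∃ c : Fin k → X,
    (∀ j, dissimBall ℓ (c j) ε ⊆ Y) ∧
    (∀ j j', j ≠ j' → Disjoint (dissimBall ℓ (c j) ε) (dissimBall ℓ (c j') ε))}

/-!
By the weak-Lipschitz condition, a cell of dissimilarity diameter at most `ν₁ρ^h` whose supremum is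
`2ν₁ρ^h`-optimal consists of `4ν₁ρ^h`-optimal points. The inner balls of the cells in `I_h`
therefore pack the near-optimal set `X_{(4ν₁/ν₂)ε}` at radius `ε = ν₂ρ^h`, so `|I_h|` is at most its
packing number. That number is a genuine maximum: the cells of a deeper level have diameter less
than `ε`, so each of them contains at most one center of a packing. By the definition of the
near-optimality dimension it is at most `ε^{-d'}` for small `ε`, and finitely many depths remain,
which only affect the constant.
-/

section Packing

variable {X ι κ : Type*} {ℓ : X → X → ℝ} {Y : Set X} {ε : ℝ} {c : κ → X}

/-- The family `c` consists of centers of pairwise disjoint `ℓ`-open `ε`-balls contained in `Y`;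
`packingNumber ℓ Y ε` is the largest size of such a family. -/
structure IsBallPacking (ℓ : X → X → ℝ) (Y : Set X) (ε : ℝ) (c : κ → X) : Prop where
  ball_subset : ∀ j, dissimBall ℓ (c j) ε ⊆ Y
  disjoint : ∀ j j', j ≠ j' → Disjoint (dissimBall ℓ (c j) ε) (dissimBall ℓ (c j') ε)

lemma IsBallPacking.comp_injective {κ' : Type*} (hc : IsBallPacking ℓ Y ε c) {g : κ' → κ}
    (hg : Function.Injective g) : IsBallPacking ℓ Y ε (c ∘ g) where
  ball_subset j := hc.ball_subset (g j)
  disjoint j j' hne := hc.disjoint (g j) (g j') (hg.ne hne)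

lemma IsBallPacking.card_le_card_cover [Fintype κ] (hc : IsBallPacking ℓ Y ε c)
    {J : Finset ι} {U : ι → Set X} (hcover : ∀ x, ∃ i ∈ J, x ∈ U i)
    (hsmall : ∀ i ∈ J, ∀ x ∈ U i, ∀ y ∈ U i, ℓ x y < ε) : Fintype.card κ ≤ J.card := by
  choose g hgJ hgU using fun j => hcover (c j)
  have hg : Function.Injective g := by
    intro j j' hjj'
    by_contra hne
    have hself : c j ∈ dissimBall ℓ (c j) ε := hsmall _ (hgJ j) _ (hgU j) _ (hgU j)
    have hother : c j ∈ dissimBall ℓ (c j') ε :=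
      hsmall _ (hgJ j') _ (hgU j') _ (hjj' ▸ hgU j)
    exact Set.disjoint_left.mp (hc.disjoint j j' hne) hself hother
  exact Finset.card_le_card_of_injOn g (fun j _ => hgJ j) hg.injOn

lemma IsBallPacking.card_le_packingNumber [Fintype κ] (hc : IsBallPacking ℓ Y ε c)
    {J : Finset ι} {U : ι → Set X} (hcover : ∀ x, ∃ i ∈ J, x ∈ U i)
    (hsmall : ∀ i ∈ J, ∀ x ∈ U i, ∀ y ∈ U i, ℓ x y < ε) :
    Fintype.card κ ≤ packingNumber ℓ Y ε := by
  have hfin := hc.comp_injective (Fintype.equivFin κ).symm.injective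
  refine le_csSup ⟨J.card, ?_⟩ ⟨_, hfin.ball_subset, hfin.disjoint⟩
  rintro k ⟨b, hsub, hdisj⟩
  simpa only [Fintype.card_fin] using
    (IsBallPacking.mk hsub hdisj).card_le_card_cover hcover hsmall

end Packing

section NearOptimality

variable {X ι : Type*} {ℓ : X → X → ℝ} {f : X → ℝ} {c s : ℝ}

/-- The set `X_ε` of points at which `f` is within `ε` of the level `c` or above it; in the paper
`c` is the supremum `f*`. -/
def nearOptimal (f : X → ℝ) (c ε : ℝ) : Set X :=
  {x | f x ≥ c - ε}

/-- The weak-Lipschitz condition, with an arbitrary level `c` in place of the supremum `f*`. -/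
def WeakLipschitz (ℓ : X → X → ℝ) (f : X → ℝ) (c : ℝ) : Prop :=
  ∀ x y, c - f y ≤ c - f x + max (c - f x) (ℓ x y)

/-- The `κ`-near-optimality dimension of `f` relative to the level `c`. It is extended-real valued,
since packing numbers may grow faster than any power of `1 / ε`. -/
noncomputable def nearOptimalityDim (ℓ : X → X → ℝ) (f : X → ℝ) (c κ : ℝ) : EReal :=
  max 0 (limsup (fun ε : ℝ =>
    ((Real.log (packingNumber ℓ (nearOptimal f c (κ * ε)) ε) / Real.log (1 / ε) : ℝ) : EReal))
    (nhdsWithin 0 (Set.Ioi 0)))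

/-- The indices of the `s`-optimal cells of a family `P` indexed by `J`. The paper's `I_h` is the
case of the cells at depth `h` with `s = 2ν₁ρ^h`. -/
noncomputable def optimalNodes (J : Finset ι) (P : ι → Set X) (f : X → ℝ) (c s : ℝ) : Finset ι :=
  J.filter fun i => sSup (f '' P i) ≥ c - s

/-- A finite cover by cells of dissimilarity diameter at most `R` whose inner balls, of radius `r`
around the points `x₀ i`, are pairwise disjoint: conditions (a)–(c) at a single depth. -/
structure IsWellShapedCover (ℓ : X → X → ℝ) (J : Finset ι) (P : ι → Set X) (x₀ : ι → X)
    (r R : ℝ) : Prop where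
  exists_mem : ∀ x, ∃ i ∈ J, x ∈ P i
  dissim_le : ∀ i ∈ J, ∀ x ∈ P i, ∀ y ∈ P i, ℓ x y ≤ R
  center_mem : ∀ i ∈ J, x₀ i ∈ P i
  ball_subset : ∀ i ∈ J, dissimBall ℓ (x₀ i) r ⊆ P i
  disjoint_ball : ∀ i ∈ J, ∀ j ∈ J, i ≠ j →
    Disjoint (dissimBall ℓ (x₀ i) r) (dissimBall ℓ (x₀ j) r)

lemma WeakLipschitz.subset_nearOptimal (hf : WeakLipschitz ℓ f c) {U : Set X} (hU : U.Nonempty)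
    {R : ℝ} (hR : ∀ x ∈ U, ∀ y ∈ U, ℓ x y ≤ R) (hs : c - s ≤ sSup (f '' U)) :
    U ⊆ nearOptimal f c (s + max s R) := by
  intro y hy
  suffices hgap : c - f y ≤ s + max s R from sub_le_comm.mp hgap
  refine le_of_forall_pos_le_add fun δ hδ => ?_
  obtain ⟨_, ⟨x, hx, rfl⟩, hfx⟩ :=
    exists_lt_of_lt_csSup (hU.image f) (show c - s - δ / 2 < sSup (f '' U) by linarith)
  have hmax : max (c - f x) (ℓ x y) ≤ max s R + δ / 2 :=
    max_le (by linarith [le_max_left s R]) (by linarith [hR x hx y hy, le_max_right s R])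
  linarith [hf x y]

variable {J : Finset ι} {P : ι → Set X} {x₀ : ι → X} {r R : ℝ}

lemma IsWellShapedCover.isBallPacking_optimalNodes (hP : IsWellShapedCover ℓ J P x₀ r R)
    (hf : WeakLipschitz ℓ f c) :
    IsBallPacking ℓ (nearOptimal f c (s + max s R)) r
      (fun i : optimalNodes J P f c s => x₀ i) where
  ball_subset := by
    rintro ⟨i, hi⟩
    obtain ⟨hiJ, hopt⟩ := Finset.mem_filter.mp hi
    exact (hP.ball_subset i hiJ).trans
      (hf.subset_nearOptimal ⟨_, hP.center_mem i hiJ⟩ (hP.dissim_le i hiJ) hopt)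
  disjoint i j hij := hP.disjoint_ball i (Finset.mem_filter.mp i.2).1 j
    (Finset.mem_filter.mp j.2).1 (Subtype.coe_ne_coe.mpr hij)

lemma IsWellShapedCover.card_optimalNodes_le_packingNumber
    (hP : IsWellShapedCover ℓ J P x₀ r R) (hf : WeakLipschitz ℓ f c)
    {κ : Type*} {K : Finset κ} {U : κ → Set X} (hcover : ∀ x, ∃ i ∈ K, x ∈ U i)
    (hsmall : ∀ i ∈ K, ∀ x ∈ U i, ∀ y ∈ U i, ℓ x y < r) :
    (optimalNodes J P f c s).card ≤ packingNumber ℓ (nearOptimal f c (s + max s R)) r := by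
  simpa only [Fintype.card_coe] using
    (hP.isBallPacking_optimalNodes hf).card_le_packingNumber hcover hsmall

end NearOptimality

lemma le_rpow_neg_of_log_div_log_lt {ε N D : ℝ} (hε0 : 0 < ε) (hε1 : ε < 1)
    (h : Real.log N / Real.log (1 / ε) < D) : N ≤ ε ^ (-D) := by
  rcases le_or_gt N 0 with hN | hN
  · exact hN.trans (Real.rpow_nonneg hε0.le _)
  have hlog : 0 < Real.log (1 / ε) := Real.log_pos (one_lt_one_div hε0 hε1)
  rw [Real.le_rpow_iff_log_le hN hε0]
  calc Real.log N ≤ D * Real.log (1 / ε) := ((div_lt_iff₀ hlog).mp h).le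
    _ = -D * Real.log ε := by rw [one_div, Real.log_inv]; ring

lemma eventually_le_rpow_neg_of_limsup_lt {N : ℝ → ℝ} {D : ℝ}
    (h : limsup (fun ε : ℝ => ((Real.log (N ε) / Real.log (1 / ε) : ℝ) : EReal))
      (nhdsWithin 0 (Set.Ioi 0)) < D) :
    ∀ᶠ ε in nhdsWithin 0 (Set.Ioi 0), N ε ≤ ε ^ (-D) := by
  filter_upwards [eventually_lt_of_limsup_lt h, Ioo_mem_nhdsGT one_pos] with ε hlt hε
  exact le_rpow_neg_of_log_div_log_lt hε.1 hε.2 (EReal.coe_lt_coe_iff.mp hlt)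

lemma exists_mem_Icc_of_dyadic_split {X : Type*} {P : ℕ → ℕ → Set X} (hroot : P 0 1 = Set.univ)
    (hsplit : ∀ h i : ℕ, 1 ≤ i → i ≤ 2 ^ h → P h i = P (h + 1) (2 * i - 1) ∪ P (h + 1) (2 * i))
    (h : ℕ) (x : X) : ∃ i ∈ Finset.Icc 1 (2 ^ h), x ∈ P h i := by
  simp only [Finset.mem_Icc]
  induction h with
  | zero => exact ⟨1, by simp, hroot ▸ Set.mem_univ x⟩
  | succ h ih =>
    obtain ⟨i, ⟨hi1, hi2⟩, hx⟩ := ih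
    rw [hsplit h i hi1 hi2] at hx
    rcases hx with hx | hx
    · exact ⟨2 * i - 1, by omega, hx⟩
    · exact ⟨2 * i, by omega, hx⟩

lemma IsWellShapedCover.of_dyadic_tree {X : Type*} {ℓ : X → X → ℝ} {P : ℕ → ℕ → Set X}
    (hroot : P 0 1 = Set.univ)
    (hsplit : ∀ h i : ℕ, 1 ≤ i → i ≤ 2 ^ h → P h i = P (h + 1) (2 * i - 1) ∪ P (h + 1) (2 * i))
    {h : ℕ} {x₀ : ℕ → X} {r R : ℝ}
    (hdiam : ∀ i, 1 ≤ i → i ≤ 2 ^ h → ∀ x ∈ P h i, ∀ y ∈ P h i, ℓ x y ≤ R)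
    (hball : ∀ i, 1 ≤ i → i ≤ 2 ^ h → x₀ i ∈ P h i ∧ dissimBall ℓ (x₀ i) r ⊆ P h i)
    (hdisj : ∀ i j, 1 ≤ i → i < j → j ≤ 2 ^ h →
      Disjoint (dissimBall ℓ (x₀ i) r) (dissimBall ℓ (x₀ j) r)) :
    IsWellShapedCover ℓ (Finset.Icc 1 (2 ^ h)) (P h) x₀ r R := by
  refine ⟨exists_mem_Icc_of_dyadic_split hroot hsplit h, ?_, ?_, ?_, ?_⟩ <;>
    simp only [Finset.mem_Icc, and_imp]
  · exact hdiam
  · exact fun i hi1 hi2 => (hball i hi1 hi2).1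
  · exact fun i hi1 hi2 => (hball i hi1 hi2).2
  · intro i hi1 hi2 j hj1 hj2 hij
    rcases hij.lt_or_gt with hlt | hgt
    · exact hdisj i j hi1 hlt hj2
    · exact (hdisj j i hj1 hgt hi2).symm

theorem stmt9_general {X ι : Type*} {ℓ : X → X → ℝ} {J : ℕ → Finset ι} {P : ℕ → ι → Set X}
    {x₀ : ℕ → ι → X} {ν₁ ν₂ : ℝ} {s : ℕ → ℝ} (hν₁ : 0 ≤ ν₁) (hν₂ : 0 < ν₂)
    (hs : ∀ h, 0 < s h) (hs0 : Tendsto s atTop (nhds 0))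
    (hP : ∀ h, IsWellShapedCover ℓ (J h) (P h) (x₀ h) (ν₂ * s h) (ν₁ * s h))
    {f : X → ℝ} {c : ℝ} (hf : WeakLipschitz ℓ f c)
    {D : ℝ} (hD : nearOptimalityDim ℓ f c (4 * ν₁ / ν₂) < D) :
    ∃ C : ℝ, 0 < C ∧ ∀ h,
      ((optimalNodes (J h) (P h) f c (2 * ν₁ * s h)).card : ℝ) ≤ C * (ν₂ * s h) ^ (-D) := by
  have hr (h : ℕ) : 0 < ν₂ * s h := mul_pos hν₂ (hs h)
  have hpack (h : ℕ) : (optimalNodes (J h) (P h) f c (2 * ν₁ * s h)).card ≤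
      packingNumber ℓ (nearOptimal f c (4 * ν₁ / ν₂ * (ν₂ * s h))) (ν₂ * s h) := by
    obtain ⟨m, hm⟩ : ∃ m, ν₁ * s m < ν₂ * s h :=
      ((hs0.const_mul ν₁).eventually_lt_const (by simpa only [mul_zero] using hr h)).exists
    have hradius : 4 * ν₁ / ν₂ * (ν₂ * s h) = 2 * ν₁ * s h + max (2 * ν₁ * s h) (ν₁ * s h) := by
      rw [max_eq_left (by linarith [mul_nonneg hν₁ (hs h).le])]
      field_simp
      ring
    rw [hradius]
    exact (hP h).card_optimalNodes_le_packingNumber hf (hP m).exists_mem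
      fun i hi x hx y hy => ((hP m).dissim_le i hi x hx y hy).trans_lt hm
  have hr0 : Tendsto (fun h => ν₂ * s h) atTop (nhdsWithin 0 (Set.Ioi 0)) :=
    tendsto_nhdsWithin_iff.mpr
      ⟨by simpa only [mul_zero] using hs0.const_mul ν₂, Eventually.of_forall hr⟩
  have hgrowth := hr0.eventually
    (eventually_le_rpow_neg_of_limsup_lt ((le_max_right _ _).trans_lt hD))
  have hbigO : (fun h => ((optimalNodes (J h) (P h) f c (2 * ν₁ * s h)).card : ℝ))
      =O[atTop] fun h => (ν₂ * s h) ^ (-D) := by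
    refine Asymptotics.IsBigO.of_norm_eventuallyLE (hgrowth.mono fun h hN => ?_)
    simpa only [Real.norm_natCast] using (Nat.cast_le.mpr (hpack h)).trans hN
  obtain ⟨C, hC, hbound⟩ := Asymptotics.bound_of_isBigO_nat_atTop hbigO
  refine ⟨C, hC, fun h => ?_⟩
  have hpow := Real.rpow_pos_of_pos (hr h) (-D)
  simpa only [Real.norm_natCast, Real.norm_of_nonneg hpow.le] using hbound hpow.ne'

/-- Lemma `I_h` bound: under the tree-of-coverings assumptions (a)–(c) and the
weak-Lipschitz condition, the number `|I_h|` of `2ν₁ρ^h`-optimal nodes at depth `h` satisfies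
`|I_h| ≤ C (ν₂ ρ^h)^{−d'}` for every `d'` larger than the `4ν₁/ν₂`-near-optimality
dimension `d` of `f`. -/
theorem stmt9 {X : Type*} [Nonempty X]
    (ℓ : X → X → ℝ) (hℓ : ∀ x y, 0 ≤ ℓ x y)
    (P : ℕ → ℕ → Set X)
    (hroot : P 0 1 = Set.univ)
    (hsplit : ∀ h i : ℕ, 1 ≤ i → i ≤ 2 ^ h →
      P h i = P (h + 1) (2 * i - 1) ∪ P (h + 1) (2 * i))
    (ν₁ ν₂ ρ : ℝ) (hν₂ : 0 < ν₂) (hν₁₂ : ν₂ ≤ ν₁) (hρ0 : 0 < ρ) (hρ1 : ρ < 1)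
    (ha : ∀ h i : ℕ, 1 ≤ i → i ≤ 2 ^ h →
      ∀ x ∈ P h i, ∀ y ∈ P h i, ℓ x y ≤ ν₁ * ρ ^ h)
    (x₀ : ℕ → ℕ → X)
    (hb : ∀ h i : ℕ, 1 ≤ i → i ≤ 2 ^ h →
      x₀ h i ∈ P h i ∧ dissimBall ℓ (x₀ h i) (ν₂ * ρ ^ h) ⊆ P h i)
    (hc : ∀ h i j : ℕ, 1 ≤ i → i < j → j ≤ 2 ^ h →
      Disjoint (dissimBall ℓ (x₀ h i) (ν₂ * ρ ^ h)) (dissimBall ℓ (x₀ h j) (ν₂ * ρ ^ h)))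
    (f : X → ℝ) (M : ℝ) (hf : ∀ x, |f x| ≤ M)
    (fstar : ℝ) (hfstar : fstar = ⨆ x, f x)
    (hweak : ∀ x y, fstar - f y ≤ fstar - f x + max (fstar - f x) (ℓ x y))
    (Xe : ℝ → Set X) (hXe : ∀ ε : ℝ, Xe ε = {x | f x ≥ fstar - ε})
    (I : ℕ → Finset ℕ)
    (hI : ∀ h : ℕ, I h = (Finset.Icc 1 (2 ^ h)).filter
      (fun i => sSup (f '' P h i) ≥ fstar - 2 * ν₁ * ρ ^ h))
    (d : EReal)
    (hd : d = max 0 (Filter.limsup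
      (fun ε : ℝ =>
        ((Real.log (packingNumber ℓ (Xe (4 * ν₁ / ν₂ * ε)) ε) / Real.log (1 / ε) : ℝ) : EReal))
      (nhdsWithin 0 (Set.Ioi 0))))
    (d' : ℝ) (hd' : d < (d' : EReal)) :
    ∃ C : ℝ, 0 < C ∧ ∀ h : ℕ, ((I h).card : ℝ) ≤ C * (ν₂ * ρ ^ h) ^ (-d') := by
  obtain rfl : Xe = nearOptimal f fstar := funext hXe
  obtain rfl := funext hI
  exact stmt9_general (hν₂.le.trans hν₁₂) hν₂ (pow_pos hρ0)
    (tendsto_pow_atTop_nhds_zero_of_lt_one hρ0.le hρ1)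
    (fun h => .of_dyadic_tree hroot hsplit (ha h) (hb h) (hc h)) hweak (hd.symm.trans_lt hd')
end
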